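/- Let a_n = √(2 log n), c_n = log(√(4π log n)), t_n(x) = x - c_n, and let Ψ(u) = 1 - Φ(u) be the standard normal tail function. Then there exist a constant C > 0 and N ∈ ℕ such that for all n ≥ N and all x ∈ [-(1/4) log log n, (log n)^{1/4}], one has Ψ(a_n + t_n(x)/a_n) = (1/n) e^{-x} (1 - (t_n(x)² + 2 t_n(x) + 2)/(4 log n)) (1 + r_n(x)) with |r_n(x)| ≤ C t_n(x)⁴/(log n)² (interpreting t_n(x)⁴/(log n)² ≥ (log n)^{-2}). -/

import Mathlib

open MeasureTheory Filter Real

/-- The standard normal cumulative distribution function. -/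
noncomputable def stdNormalCDF (x : ℝ) : ℝ :=
  ∫ t in Set.Iic x, Real.exp (-t ^ 2 / 2) / Real.sqrt (2 * Real.pi)

/-- The standard normal density. -/
noncomputable def stdNormalPDF (x : ℝ) : ℝ :=
  Real.exp (-x ^ 2 / 2) / Real.sqrt (2 * Real.pi)

/-- Scaling constant `a_n = √(2 log n)`. -/
noncomputable def aSeq (n : ℕ) : ℝ := Real.sqrt (2 * Real.log n)

/-- Centering constant
`b_n = √(2 log n) - (log log n + log (4π)) / (2 √(2 log n))`. -/
noncomputable def bSeq (n : ℕ) : ℝ :=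
  aSeq n - (Real.log (Real.log n) + Real.log (4 * Real.pi)) / (2 * aSeq n)

/-- `c_n = log (√(4 π log n))`. -/
noncomputable def cSeq (n : ℕ) : ℝ := Real.log (Real.sqrt (4 * Real.pi * Real.log n))

/-- The CDF of `Y_n = a_n (X_{(n)} - b_n)` where `X_{(n)}` is the maximum of `n`
i.i.d. standard normal random variables: `P(Y_n ≤ x) = Φ(b_n + x/a_n)^n`. -/
noncomputable def Fmax (n : ℕ) (x : ℝ) : ℝ := stdNormalCDF (bSeq n + x / aSeq n) ^ n

/-- The density of `Y_n = a_n (X_{(n)} - b_n)`: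
`f_n(x) = n a_n⁻¹ φ(b_n + x/a_n) Φ(b_n + x/a_n)^{n-1}`. -/
noncomputable def fmax (n : ℕ) (x : ℝ) : ℝ :=
  n * (aSeq n)⁻¹ * stdNormalPDF (bSeq n + x / aSeq n) *
    stdNormalCDF (bSeq n + x / aSeq n) ^ (n - 1)

/-- The density of the standard Gumbel distribution. -/
noncomputable def gumbelPDF (x : ℝ) : ℝ := Real.exp (-x - Real.exp (-x))

/-!
Repeated integration by parts gives the two-term expansion of the Mills ratio,
`u Ψ(u) / φ(u) = 1 - u⁻² + O(u⁻⁴)`. At `u = a + t / a` the density factors as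
`φ(u) = φ(a) exp (-t) exp (-t² / (2 a²))`, so that `Ψ(u)` is `φ(a) / a * exp (-t)` times a product
of three factors close to `1`. All three deviations are of order `ε = max (t², 1) / a²`, hence the
product equals its linearisation `1 - (t² + 2 t + 2) / (2 a²)` up to `O(ε²)`. Finally
`φ(a_n) / a_n = exp (-c_n) / n`.
-/

open Set Asymptotics ProbabilityTheory

section StdNormal

lemma stdNormalPDF_eq_gaussianPDFReal : stdNormalPDF = gaussianPDFReal 0 1 := by
  ext t
  simp [stdNormalPDF, gaussianPDFReal, div_eq_inv_mul]

lemma stdNormalPDF_pos (t : ℝ) : 0 < stdNormalPDF t := by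
  unfold stdNormalPDF
  positivity

lemma integrable_stdNormalPDF : Integrable stdNormalPDF :=
  stdNormalPDF_eq_gaussianPDFReal ▸ integrable_gaussianPDFReal 0 1

lemma integral_stdNormalPDF : ∫ t, stdNormalPDF t = 1 :=
  stdNormalPDF_eq_gaussianPDFReal ▸ integral_gaussianPDFReal_eq_one 0 one_ne_zero

lemma hasDerivAt_stdNormalPDF (t : ℝ) : HasDerivAt stdNormalPDF (-t * stdNormalPDF t) t := by
  have hexponent : HasDerivAt (fun x : ℝ ↦ -x ^ 2 / 2) (-t) t :=
    ((hasDerivAt_pow 2 t).neg.div_const 2).congr_deriv (by norm_num; ring)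
  exact (hexponent.exp.div_const √(2 * π)).congr_deriv (by rw [stdNormalPDF]; ring)

lemma tendsto_stdNormalPDF_atTop : Tendsto stdNormalPDF atTop (nhds 0) := by
  have hexponent : Tendsto (fun x : ℝ ↦ -x ^ 2 / 2) atTop atBot :=
    (tendsto_neg_atTop_atBot.comp (tendsto_pow_atTop two_ne_zero)).atBot_div_const two_pos
  rw [← zero_div √(2 * π)]
  exact (tendsto_exp_atBot.comp hexponent).div_const √(2 * π)

lemma stdNormalPDF_add (a h : ℝ) :
    stdNormalPDF (a + h) = stdNormalPDF a * exp (-(a * h)) * exp (-(h ^ 2 / 2)) := by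
  have hexp : exp (-(a + h) ^ 2 / 2) = exp (-a ^ 2 / 2) * exp (-(a * h)) * exp (-(h ^ 2 / 2)) := by
    rw [← exp_add, ← exp_add]
    ring_nf
  rw [stdNormalPDF, stdNormalPDF, hexp]
  ring

lemma one_sub_stdNormalCDF (u : ℝ) : 1 - stdNormalCDF u = ∫ t in Ioi u, stdNormalPDF t := by
  have hsplit := intervalIntegral.integral_Iic_add_Ioi (b := u)
    integrable_stdNormalPDF.integrableOn integrable_stdNormalPDF.integrableOn
  rw [integral_stdNormalPDF] at hsplit
  exact (eq_sub_of_add_eq' hsplit).symm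

end StdNormal

section MillsRatio

/-- The Mills ratio `Ψ(u) / φ(u)` of the standard normal distribution. -/
noncomputable def millsRatio (u : ℝ) : ℝ := (1 - stdNormalCDF u) / stdNormalPDF u

lemma stdNormalPDF_mul_millsRatio (u : ℝ) : stdNormalPDF u * millsRatio u = 1 - stdNormalCDF u :=
  mul_div_cancel₀ _ (stdNormalPDF_pos u).ne'

variable {u : ℝ}

lemma integrableOn_stdNormalPDF_div_pow (hu : 0 < u) (k : ℕ) :
    IntegrableOn (fun t ↦ stdNormalPDF t / t ^ k) (Ioi u) := by
  refine Integrable.mono' (integrable_stdNormalPDF.div_const (u ^ k)).integrableOn ?_ ?_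
  · exact (integrable_stdNormalPDF.aestronglyMeasurable.aemeasurable.restrict.div
      (by fun_prop)).aestronglyMeasurable
  · filter_upwards [ae_restrict_mem measurableSet_Ioi] with t ht
    have htpos : 0 < t := hu.trans ht
    have hφ := stdNormalPDF_pos t
    rw [norm_of_nonneg (by positivity)]
    gcongr
    exact le_of_lt ht

lemma hasDerivAt_neg_stdNormalPDF_div_pow {t : ℝ} (ht : t ≠ 0) (k : ℕ) :
    HasDerivAt (fun s ↦ -(stdNormalPDF s / s ^ (k + 1)))
      (stdNormalPDF t / t ^ k + (k + 1) * (stdNormalPDF t / t ^ (k + 2))) t := by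
  refine ((hasDerivAt_stdNormalPDF t).div (hasDerivAt_pow (k + 1) t)
    (pow_ne_zero _ ht)).neg.congr_deriv ?_
  field_simp
  push_cast [Nat.add_sub_cancel]
  ring

lemma integral_Ioi_stdNormalPDF_div_pow (hu : 0 < u) (k : ℕ) :
    ∫ t in Ioi u, stdNormalPDF t / t ^ k =
      stdNormalPDF u / u ^ (k + 1) - (k + 1) * ∫ t in Ioi u, stdNormalPDF t / t ^ (k + 2) := by
  have hderiv : ∀ t ∈ Ici u, HasDerivAt (fun s ↦ -(stdNormalPDF s / s ^ (k + 1)))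
      (stdNormalPDF t / t ^ k + (k + 1) * (stdNormalPDF t / t ^ (k + 2))) t :=
    fun t ht ↦ hasDerivAt_neg_stdNormalPDF_div_pow (hu.trans_le ht).ne' k
  have hint := integrableOn_stdNormalPDF_div_pow hu k
  have hint' := (integrableOn_stdNormalPDF_div_pow hu (k + 2)).const_mul ((k : ℝ) + 1)
  have hlim : Tendsto (fun s ↦ -(stdNormalPDF s / s ^ (k + 1))) atTop (nhds 0) := by
    simpa using (tendsto_stdNormalPDF_atTop.div_atTop (tendsto_pow_atTop k.succ_ne_zero)).neg
  have hparts := integral_Ioi_of_hasDerivAt_of_tendsto' hderiv (hint.add hint') hlim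
  rw [integral_add hint hint', integral_const_mul] at hparts
  linarith

lemma integral_Ioi_stdNormalPDF_div_pow_nonneg (hu : 0 < u) (k : ℕ) :
    0 ≤ ∫ t in Ioi u, stdNormalPDF t / t ^ k :=
  setIntegral_nonneg measurableSet_Ioi fun t ht ↦
    div_nonneg (stdNormalPDF_pos t).le (pow_nonneg (hu.trans ht).le k)

lemma integral_Ioi_stdNormalPDF_div_pow_le (hu : 0 < u) (k : ℕ) :
    ∫ t in Ioi u, stdNormalPDF t / t ^ k ≤ stdNormalPDF u / u ^ (k + 1) := by
  rw [integral_Ioi_stdNormalPDF_div_pow hu k]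
  exact sub_le_self _
    (mul_nonneg (by positivity) (integral_Ioi_stdNormalPDF_div_pow_nonneg hu (k + 2)))

lemma abs_mul_millsRatio_sub_le (hu : 0 < u) :
    |u * millsRatio u - (1 - (u ^ 2)⁻¹)| ≤ 3 * ((u ^ 2)⁻¹) ^ 2 := by
  set I := ∫ t in Ioi u, stdNormalPDF t / t ^ 4
  have hφ := stdNormalPDF_pos u
  have hI : 0 ≤ I := integral_Ioi_stdNormalPDF_div_pow_nonneg hu 4
  have htail : 1 - stdNormalCDF u =
      stdNormalPDF u / u - (stdNormalPDF u / u ^ 3 - 3 * I) := by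
    have h0 : ∫ t in Ioi u, stdNormalPDF t =
        stdNormalPDF u / u - ∫ t in Ioi u, stdNormalPDF t / t ^ 2 := by
      simpa using integral_Ioi_stdNormalPDF_div_pow hu 0
    have h2 : ∫ t in Ioi u, stdNormalPDF t / t ^ 2 = stdNormalPDF u / u ^ 3 - 3 * I := by
      simpa [two_add_one_eq_three] using integral_Ioi_stdNormalPDF_div_pow hu 2
    rw [one_sub_stdNormalCDF, h0, h2]
  have hremainder : u * millsRatio u - (1 - (u ^ 2)⁻¹) = 3 * (u / stdNormalPDF u * I) := by
    rw [millsRatio, htail]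
    field_simp
    ring
  rw [hremainder, abs_of_nonneg (by positivity)]
  gcongr
  calc u / stdNormalPDF u * I
      ≤ u / stdNormalPDF u * (stdNormalPDF u / u ^ (4 + 1)) := by
        gcongr
        exact integral_Ioi_stdNormalPDF_div_pow_le hu 4
    _ = ((u ^ 2)⁻¹) ^ 2 := by field_simp

end MillsRatio

section Linearisation

lemma abs_mul_sub_one_add_add_le {A B α β δ η : ℝ}
    (hA : |A - (1 + α)| ≤ δ) (hB : |B - (1 + β)| ≤ η) :
    |A * B - (1 + (α + β))| ≤ δ * |B| + |1 + α| * η + |α| * |β| := by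
  have hsplit : A * B - (1 + (α + β)) = (A - (1 + α)) * B + (1 + α) * (B - (1 + β)) + α * β := by
    ring
  rw [hsplit]
  refine (abs_add_three _ _ _).trans ?_
  rw [abs_mul, abs_mul, abs_mul]
  gcongr

variable {y : ℝ}

lemma abs_inv_one_add_sub_le (hy : |y| ≤ 1 / 2) : |(1 + y)⁻¹ - (1 + -y)| ≤ 2 * y ^ 2 := by
  have hhalf : 1 / 2 ≤ 1 + y := by linarith [neg_abs_le y]
  have hremainder : (1 + y)⁻¹ - (1 + -y) = (1 + y)⁻¹ * y ^ 2 := by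
    field_simp
    ring
  rw [hremainder, abs_of_nonneg (by positivity)]
  gcongr
  exact inv_le_of_inv_le₀ two_pos (by linarith)

lemma inv_one_add_mem_Icc (hy : |y| ≤ 1 / 8) : (1 + y)⁻¹ ∈ Icc 0 (8 / 7) := by
  have hy' : 7 / 8 ≤ 1 + y := by linarith [neg_abs_le y]
  refine ⟨by positivity, ?_⟩
  calc (1 + y)⁻¹ ≤ (7 / 8)⁻¹ := by gcongr
    _ = 8 / 7 := by norm_num

lemma abs_sub_mul_inv_one_add_sq_le (s : ℝ) (hy : |y| ≤ 1 / 8) :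
    |s - s * (1 + y)⁻¹ ^ 2| ≤ 3 * (|s| * |y|) := by
  obtain ⟨hp0, hp1⟩ := inv_one_add_mem_Icc hy
  have hy0 : 1 + y ≠ 0 := by linarith [neg_abs_le y]
  have h2y : |2 + y| ≤ 17 / 8 := abs_le.2 ⟨by linarith [neg_abs_le y], by linarith [le_abs_self y]⟩
  have hremainder : s - s * (1 + y)⁻¹ ^ 2 = (2 + y) * (1 + y)⁻¹ ^ 2 * (s * y) := by
    field_simp
    ring
  rw [hremainder, abs_mul, abs_mul s, abs_mul (2 + y), abs_of_nonneg (sq_nonneg (1 + y)⁻¹)]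
  gcongr
  calc |2 + y| * (1 + y)⁻¹ ^ 2 ≤ 17 / 8 * (8 / 7) ^ 2 := by gcongr
    _ ≤ 3 := by norm_num

lemma abs_exp_neg_mul_inv_one_add_mul_sub_le {ε z s w : ℝ} (hε : ε ≤ 1 / 8) (hz0 : 0 ≤ z)
    (hz : z ≤ ε) (hy : |y| ≤ ε) (hs : |s| ≤ ε) (hw : |w - (1 + -s)| ≤ 9 * ε ^ 2) :
    |exp (-z) * (1 + y)⁻¹ * w - (1 - z - y - s)| ≤ 30 * ε ^ 2 := by
  obtain ⟨hp0, hp1⟩ := inv_one_add_mem_Icc (hy.trans hε)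
  have hε0 : 0 ≤ ε := hz0.trans hz
  have hεsq : ε ^ 2 ≤ 1 / 64 := by nlinarith
  have hexp : |exp (-z) - (1 + -z)| ≤ ε ^ 2 := by
    rw [← sub_sub]
    refine (abs_exp_sub_one_sub_id_le ?_).trans ?_
    · rw [abs_neg, abs_of_nonneg hz0]
      linarith
    · rw [neg_sq]
      gcongr
  have hinv : |(1 + y)⁻¹ - (1 + -y)| ≤ 2 * ε ^ 2 := by
    refine (abs_inv_one_add_sub_le (by linarith)).trans ?_
    rw [← sq_abs]
    gcongr
  have hw2 : |w| ≤ 2 := by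
    rw [abs_le] at hw hs ⊢
    constructor <;> linarith
  have hexp_inv : |exp (-z) * (1 + y)⁻¹ - (1 + (-z + -y))| ≤ 5 * ε ^ 2 := by
    refine (abs_mul_sub_one_add_add_le hexp hinv).trans ?_
    rw [abs_of_nonneg hp0, abs_of_nonneg (by linarith : 0 ≤ 1 + -z), abs_neg, abs_neg,
      abs_of_nonneg hz0]
    calc ε ^ 2 * (1 + y)⁻¹ + (1 + -z) * (2 * ε ^ 2) + z * |y|
        ≤ ε ^ 2 * 2 + 1 * (2 * ε ^ 2) + ε * ε := by gcongr <;> linarith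
      _ = 5 * ε ^ 2 := by ring
  have hzy : |-z + -y| ≤ 2 * ε := by
    rw [abs_le] at hy ⊢
    constructor <;> linarith
  have hzy' : |1 + (-z + -y)| ≤ 2 := by
    rw [abs_le] at hzy ⊢
    constructor <;> linarith
  have hlin : 1 - z - y - s = 1 + (-z + -y + -s) := by ring
  rw [hlin]
  refine (abs_mul_sub_one_add_add_le hexp_inv hw).trans ?_
  rw [abs_neg s]
  calc 5 * ε ^ 2 * |w| + |1 + (-z + -y)| * (9 * ε ^ 2) + |-z + -y| * |s|
      ≤ 5 * ε ^ 2 * 2 + 2 * (9 * ε ^ 2) + 2 * ε * ε := by gcongr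
    _ = 30 * ε ^ 2 := by ring

end Linearisation

section TailExpansion

variable {a t : ℝ}

lemma one_sub_stdNormalCDF_add_div (ha : a ≠ 0) (t : ℝ) (ht : 1 + t / a ^ 2 ≠ 0) :
    1 - stdNormalCDF (a + t / a) = stdNormalPDF a / a * exp (-t) *
      (exp (-(t ^ 2 / (2 * a ^ 2))) * (1 + t / a ^ 2)⁻¹ *
        ((a + t / a) * millsRatio (a + t / a))) := by
  have hφ : stdNormalPDF (a + t / a) =
      stdNormalPDF a * exp (-t) * exp (-(t ^ 2 / (2 * a ^ 2))) := by
    rw [stdNormalPDF_add]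
    congr 3 <;> field_simp
  have hu : a + t / a = a * (1 + t / a ^ 2) := by field_simp
  rw [← stdNormalPDF_mul_millsRatio, hφ]
  generalize millsRatio (a + t / a) = m
  rw [hu]
  generalize 1 + t / a ^ 2 = p at ht
  field_simp

lemma abs_div_sq_le_max_div_sq (a t : ℝ) : |t / a ^ 2| ≤ max (t ^ 2) 1 / a ^ 2 := by
  rw [abs_div, abs_of_nonneg (sq_nonneg a)]
  gcongr
  rcases le_total |t| 1 with h | h
  · exact h.trans (le_max_right _ _)
  · exact ((le_self_pow₀ h two_ne_zero).trans_eq (sq_abs t)).trans (le_max_left _ _)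

lemma inv_sq_le_max_div_sq (a t : ℝ) : (a ^ 2)⁻¹ ≤ max (t ^ 2) 1 / a ^ 2 := by
  rw [inv_eq_one_div]
  gcongr
  exact le_max_right _ _

lemma sq_div_two_mul_sq_le_max_div_sq (a t : ℝ) : t ^ 2 / (2 * a ^ 2) ≤ max (t ^ 2) 1 / a ^ 2 :=
  calc t ^ 2 / (2 * a ^ 2) = t ^ 2 / a ^ 2 / 2 := by rw [mul_comm, div_div]
    _ ≤ t ^ 2 / a ^ 2 := half_le_self (by positivity)
    _ ≤ max (t ^ 2) 1 / a ^ 2 := by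
      gcongr
      exact le_max_left _ _

lemma abs_add_div_mul_millsRatio_sub_le (ha : 0 < a) (ht : max (t ^ 2) 1 / a ^ 2 ≤ 1 / 8) :
    |(a + t / a) * millsRatio (a + t / a) - (1 + -(a ^ 2)⁻¹)| ≤
      9 * (max (t ^ 2) 1 / a ^ 2) ^ 2 := by
  set ε := max (t ^ 2) 1 / a ^ 2
  have hy : |t / a ^ 2| ≤ ε := abs_div_sq_le_max_div_sq a t
  have hs : |(a ^ 2)⁻¹| ≤ ε :=
    (abs_of_nonneg (by positivity)).trans_le (inv_sq_le_max_div_sq a t)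
  obtain ⟨hp0, hp1⟩ := inv_one_add_mem_Icc (hy.trans ht)
  have hu : a + t / a = a * (1 + t / a ^ 2) := by field_simp
  have hupos : 0 < a + t / a := hu ▸ mul_pos ha (by linarith [neg_abs_le (t / a ^ 2)])
  have huinv : ((a + t / a) ^ 2)⁻¹ = (a ^ 2)⁻¹ * (1 + t / a ^ 2)⁻¹ ^ 2 := by
    rw [hu, mul_pow, mul_inv, inv_pow (1 + t / a ^ 2)]
  have hshift : |(a ^ 2)⁻¹ - (a ^ 2)⁻¹ * (1 + t / a ^ 2)⁻¹ ^ 2| ≤ 3 * (ε * ε) :=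
    (abs_sub_mul_inv_one_add_sq_le _ (hy.trans ht)).trans (by gcongr)
  have hmills := abs_mul_millsRatio_sub_le hupos
  rw [huinv] at hmills
  have hfourth : 3 * ((a ^ 2)⁻¹ * (1 + t / a ^ 2)⁻¹ ^ 2) ^ 2 ≤ 6 * ε ^ 2 :=
    calc 3 * ((a ^ 2)⁻¹ * (1 + t / a ^ 2)⁻¹ ^ 2) ^ 2 ≤ 3 * (ε * (8 / 7) ^ 2) ^ 2 := by
          gcongr
          exact inv_sq_le_max_div_sq a t
      _ ≤ 6 * ε ^ 2 := by nlinarith [sq_nonneg ε]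
  rw [abs_le] at hshift hmills ⊢
  constructor <;> linarith

lemma half_le_one_sub_div_two_mul_sq (ht : max (t ^ 2) 1 / a ^ 2 ≤ 1 / 8) :
    1 / 2 ≤ 1 - (t ^ 2 + 2 * t + 2) / (2 * a ^ 2) := by
  have hle : t ^ 2 + 2 * t + 2 ≤ 5 * max (t ^ 2) 1 := by
    nlinarith [le_max_left (t ^ 2) 1, le_max_right (t ^ 2) 1, sq_nonneg (t - 1)]
  have hquot : (t ^ 2 + 2 * t + 2) / (2 * a ^ 2) ≤ 5 / 2 * (max (t ^ 2) 1 / a ^ 2) :=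
    calc (t ^ 2 + 2 * t + 2) / (2 * a ^ 2) ≤ 5 * max (t ^ 2) 1 / (2 * a ^ 2) := by gcongr
      _ = 5 / 2 * (max (t ^ 2) 1 / a ^ 2) := by ring
  linarith

theorem exists_one_sub_stdNormalCDF_add_div_eq (ha : 0 < a)
    (ht : max (t ^ 2) 1 / a ^ 2 ≤ 1 / 8) :
    ∃ r : ℝ,
      1 - stdNormalCDF (a + t / a) =
        stdNormalPDF a / a * exp (-t) * (1 - (t ^ 2 + 2 * t + 2) / (2 * a ^ 2)) * (1 + r) ∧
      |r| ≤ 60 * (max (t ^ 2) 1 / a ^ 2) ^ 2 := by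
  set D := 1 - (t ^ 2 + 2 * t + 2) / (2 * a ^ 2) with hD
  set Q := exp (-(t ^ 2 / (2 * a ^ 2))) * (1 + t / a ^ 2)⁻¹ *
    ((a + t / a) * millsRatio (a + t / a)) with hQ
  have hy : |t / a ^ 2| ≤ max (t ^ 2) 1 / a ^ 2 := abs_div_sq_le_max_div_sq a t
  have hs : |(a ^ 2)⁻¹| ≤ max (t ^ 2) 1 / a ^ 2 :=
    (abs_of_nonneg (by positivity)).trans_le (inv_sq_le_max_div_sq a t)
  have hlin : D = 1 - t ^ 2 / (2 * a ^ 2) - t / a ^ 2 - (a ^ 2)⁻¹ := by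
    rw [hD]
    field_simp
    ring
  have hQD : |Q - D| ≤ 30 * (max (t ^ 2) 1 / a ^ 2) ^ 2 :=
    hlin ▸ abs_exp_neg_mul_inv_one_add_mul_sub_le ht (by positivity)
      (sq_div_two_mul_sq_le_max_div_sq a t) hy hs (abs_add_div_mul_millsRatio_sub_le ha ht)
  have hDhalf : 1 / 2 ≤ D := half_le_one_sub_div_two_mul_sq ht
  have hDpos : 0 < D := by linarith
  refine ⟨(Q - D) / D, ?_, ?_⟩
  · rw [one_sub_stdNormalCDF_add_div ha.ne' t (by linarith [neg_abs_le (t / a ^ 2)]), ← hQ]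
    field_simp
    ring
  · rw [abs_div, abs_of_pos hDpos, div_le_iff₀ hDpos]
    nlinarith [sq_nonneg (max (t ^ 2) 1 / a ^ 2)]

end TailExpansion

section ExtremeValueScaling

variable {n : ℕ}

lemma aSeq_sq (n : ℕ) : aSeq n ^ 2 = 2 * log n :=
  sq_sqrt (mul_nonneg zero_le_two (log_natCast_nonneg n))

lemma exp_cSeq (hn : 0 < log n) : exp (cSeq n) = √(2 * π) * aSeq n := by
  rw [cSeq, exp_log (by positivity), aSeq, ← sqrt_mul (by positivity)]
  ring_nf

lemma stdNormalPDF_aSeq_div (hn : 0 < log n) :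
    stdNormalPDF (aSeq n) / aSeq n = 1 / n * exp (-cSeq n) := by
  have hn0 : (0 : ℝ) < n := by
    refine n.cast_nonneg.lt_of_ne fun h ↦ ?_
    simp [← h] at hn
  have hexp : exp (-aSeq n ^ 2 / 2) = 1 / n := by
    rw [aSeq_sq, neg_div, mul_div_cancel_left₀ _ two_ne_zero, exp_neg, exp_log hn0, one_div]
  rw [stdNormalPDF, hexp, exp_neg, exp_cSeq hn, div_div, div_eq_mul_inv]

lemma isLittleO_log_sqrt_mul {k : ℝ} (hk : 0 < k) :
    (fun L ↦ log √(k * L)) =o[atTop] fun L ↦ √L := by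
  have htop : Tendsto (fun L ↦ √(k * L)) atTop atTop :=
    tendsto_sqrt_atTop.comp (tendsto_id.const_mul_atTop hk)
  refine (isLittleO_log_id_atTop.comp_tendsto htop).trans_isBigO ?_
  simpa [Function.comp_def, sqrt_mul hk.le] using
    (isBigO_refl (fun L ↦ √L) atTop).const_mul_left √k

lemma isLittleO_rpow_rpow_atTop {p q : ℝ} (hpq : p < q) :
    (fun L : ℝ ↦ L ^ p) =o[atTop] fun L ↦ L ^ q := by
  have hone : (fun _ : ℝ ↦ (1 : ℝ)) =o[atTop] fun L ↦ L ^ (q - p) :=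
    (isLittleO_const_left_of_ne one_ne_zero).2
      (tendsto_norm_atTop_atTop.comp (tendsto_rpow_atTop (sub_pos.2 hpq)))
  refine ((isBigO_refl (fun L : ℝ ↦ L ^ p) atTop).mul_isLittleO hone).congr' ?_ ?_
  · exact Eventually.of_forall fun L ↦ mul_one _
  · filter_upwards [eventually_gt_atTop 0] with L hL
    rw [← rpow_add hL, add_sub_cancel]

lemma eventually_max_sq_sub_cSeq_le :
    ∀ᶠ n : ℕ in atTop, ∀ x ∈ Icc (-(1 / 4) * log (log n)) (log n ^ ((1 : ℝ) / 4)),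
      max ((x - cSeq n) ^ 2) 1 ≤ log n / 4 := by
  have hlog : (fun L ↦ 1 / 4 * log L) =o[atTop] fun L ↦ √L := by
    simpa only [sqrt_eq_rpow] using
      (isLittleO_log_rpow_atTop (one_half_pos (α := ℝ))).const_mul_left (1 / 4)
  have hrpow : (fun L : ℝ ↦ L ^ ((1 : ℝ) / 4)) =o[atTop] fun L ↦ √L := by
    simpa only [sqrt_eq_rpow] using isLittleO_rpow_rpow_atTop (by norm_num : (1 : ℝ) / 4 < 1 / 2)
  have hsum := (hrpow.add hlog).add
    (isLittleO_log_sqrt_mul (k := 4 * π) (by positivity)).norm_left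
  have hbound := hsum.bound (one_half_pos (α := ℝ))
  have hlim : Tendsto (fun n : ℕ ↦ log n) atTop atTop :=
    tendsto_log_atTop.comp tendsto_natCast_atTop_atTop
  filter_upwards [hlim.eventually hbound, hlim.eventually_ge_atTop 4] with n hn hn4 x ⟨hx1, hx2⟩
  have hloglog : 0 ≤ log (log n) := log_nonneg (by linarith)
  have hrpow : 0 ≤ log n ^ ((1 : ℝ) / 4) := by positivity
  have hsum_le : log n ^ ((1 : ℝ) / 4) + 1 / 4 * log (log n) + |cSeq n| ≤ 1 / 2 * √(log n) := by
    rw [norm_of_nonneg (sqrt_nonneg _)] at hn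
    exact (le_norm_self _).trans hn
  have hx : |x| ≤ log n ^ ((1 : ℝ) / 4) + 1 / 4 * log (log n) :=
    abs_le.2 ⟨by linarith, by linarith⟩
  have habs : |x - cSeq n| ≤ 1 / 2 * √(log n) := by linarith [abs_sub x (cSeq n)]
  refine max_le ?_ (by linarith)
  calc (x - cSeq n) ^ 2 = |x - cSeq n| ^ 2 := (sq_abs _).symm
    _ ≤ (1 / 2 * √(log n)) ^ 2 := by gcongr
    _ = log n / 4 := by
      rw [mul_pow, sq_sqrt (by linarith)]
      ring

lemma sq_max_sq_div_aSeq_sq (n : ℕ) (t : ℝ) :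
    (max (t ^ 2) 1 / aSeq n ^ 2) ^ 2 = 1 / 4 * max (t ^ 4 / log n ^ 2) (log n ^ 2)⁻¹ := by
  have hmax : max (t ^ 2) 1 ^ 2 = max (t ^ 4) 1 := by
    rw [(pow_left_monotoneOn (n := 2)).map_max (sq_nonneg t) zero_le_one]
    ring_nf
  rw [aSeq_sq, div_pow, hmax, ← one_div, max_div_div_right (sq_nonneg _)]
  ring

end ExtremeValueScaling

theorem psi_asymptotic_general {n : ℕ} {x : ℝ} (hx : max ((x - cSeq n) ^ 2) 1 ≤ log n / 4) :
    ∃ r : ℝ,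
      1 - stdNormalCDF (aSeq n + (x - cSeq n) / aSeq n) =
        (1 / n) * exp (-x) *
          (1 - ((x - cSeq n) ^ 2 + 2 * (x - cSeq n) + 2) / (4 * log n)) * (1 + r) ∧
      |r| ≤ 15 * max ((x - cSeq n) ^ 4 / log n ^ 2) (log n ^ 2)⁻¹ := by
  have hn : 0 < log n := by linarith [le_max_right ((x - cSeq n) ^ 2) 1]
  have ha : 0 < aSeq n := sqrt_pos.2 (by positivity)
  have hε : max ((x - cSeq n) ^ 2) 1 / aSeq n ^ 2 ≤ 1 / 8 := by
    rw [aSeq_sq, div_le_iff₀ (by positivity)]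
    linarith
  obtain ⟨r, htail, hr⟩ := exists_one_sub_stdNormalCDF_add_div_eq ha hε
  have hprefactor : stdNormalPDF (aSeq n) / aSeq n * exp (-(x - cSeq n)) = 1 / n * exp (-x) := by
    rw [stdNormalPDF_aSeq_div hn, mul_assoc, ← exp_add]
    ring_nf
  refine ⟨r, ?_, ?_⟩
  · rw [htail, hprefactor, aSeq_sq]
    ring_nf
  · rw [sq_max_sq_div_aSeq_sq] at hr
    linarith

/-- Precise asymptotics of the Gaussian tail `Ψ(a_n + t_n(x)/a_n)` uniformly on
`x ∈ [-(1/4) log log n, (log n)^{1/4}]`, with relative error `O(t_n(x)⁴/(log n)²)`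
(the error term being interpreted as at least `(log n)⁻²`). -/
theorem psi_asymptotic :
    ∃ C > (0 : ℝ), ∃ N : ℕ, ∀ n ≥ N,
      ∀ x ∈ Set.Icc (-(1 / 4) * Real.log (Real.log n)) ((Real.log n) ^ ((1 : ℝ) / 4)),
        ∃ r : ℝ,
          1 - stdNormalCDF (aSeq n + (x - cSeq n) / aSeq n) =
            (1 / n) * Real.exp (-x) *
              (1 - ((x - cSeq n) ^ 2 + 2 * (x - cSeq n) + 2) / (4 * Real.log n)) *
              (1 + r) ∧
          |r| ≤ C * max ((x - cSeq n) ^ 4 / (Real.log n) ^ 2) ((Real.log n) ^ 2)⁻¹ := by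
  obtain ⟨N, hN⟩ := eventually_atTop.1 eventually_max_sq_sub_cSeq_le
  exact ⟨15, by norm_num, N, fun n hn x hx ↦ psi_asymptotic_general (hN n hn x hx)⟩
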